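/- arXiv:2402.09185 — 3 statements merged into one kernel-verified Lean document; each statement's English description precedes it below -/
import Mathlib

section
/- Let P ⊆ ℕ^d be a well-directed periodic set and let π : ℕ^d → ℕ^k be the projection onto a subset of k of the coordinates. Then π(P) is a well-directed periodic subset of ℕ^k. -/
/-- Vectors of naturals of dimension `d`. -/
abbrev NVec (d : ℕ) := Fin d → ℕ

/-- Coordinatewise cast of a natural vector into a rational vector. -/
def castQ {d : ℕ} (x : NVec d) : Fin d → ℚ := fun i => (x i : ℚ)

/-- A set in a commutative monoid is periodic if it contains `0` and is closed
under addition. -/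
def IsPeriodic {M : Type*} [AddCommMonoid M] (P : Set M) : Prop :=
  0 ∈ P ∧ ∀ p ∈ P, ∀ q ∈ P, p + q ∈ P

/-- `P ⊆ ℕ^d` is well-directed: every sequence of elements of `P` has an infinite
subsequence `(p_{m_k})` such that `p_{m_j} + ℕ·(p_{m_k} − p_{m_j}) ⊆ P` for all
`j ≤ k`. -/
def WellDirected {d : ℕ} (P : Set (NVec d)) : Prop :=
  ∀ p : ℕ → NVec d, (∀ m, p m ∈ P) →
    ∃ φ : ℕ → ℕ, StrictMono φ ∧
      ∀ j k : ℕ, j ≤ k → ∀ t : ℕ, ∃ q ∈ P,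
        castQ q = castQ (p (φ j)) + (t : ℚ) • (castQ (p (φ k)) - castQ (p (φ j)))

/-- The projection of a well-directed periodic set onto a subset of
the coordinates (given by an injection `ι : Fin k → Fin d`) is a well-directed
periodic subset of `ℕ^k`. -/
theorem proj_wellDirected_periodic {d k : ℕ} (ι : Fin k → Fin d)
    (hι : Function.Injective ι) (P : Set (NVec d))
    (hP : IsPeriodic P) (hwd : WellDirected P) :
    IsPeriodic ((fun x : NVec d => x ∘ ι) '' P) ∧
    WellDirected ((fun x : NVec d => x ∘ ι) '' P) := by
  refine ⟨⟨⟨0, hP.1, rfl⟩, ?_⟩, ?_⟩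
  · rintro _ ⟨a, ha, rfl⟩ _ ⟨b, hb, rfl⟩
    exact ⟨a + b, hP.2 a ha b hb, rfl⟩
  · intro p hp
    choose r hr hrp using hp
    obtain ⟨φ, hφ, h⟩ := hwd r hr
    refine ⟨φ, hφ, fun j k hjk t => ?_⟩
    obtain ⟨q, hq, e⟩ := h j k hjk t
    refine ⟨q ∘ ι, ⟨q, hq, rfl⟩, ?_⟩
    rw [← hrp, ← hrp]
    funext i
    exact congrFun e (ι i)
end

section
/- Let R ⊆ ℕ^d × ℕ^d be a monotone relation with reflexive transitive closure →*, let c ∈ ℕ^d, and let P be a periodic relation with P ⊆ P_c := {(x,y) : c+x →* c+y}. Define Q := {q ∈ ℕ^d : ∃(x,y) ∈ P, c+x →* q and q →* c+y} and H := {h ∈ ℕ^d : c+h ∈ Q}. Then Q + H ⊆ Q, i.e. for every q ∈ Q and h ∈ H, also q + h ∈ Q. -/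
/-- A relation on `ℕ^d` is monotone if `(x,y) ∈ R` implies `(x+v, y+v) ∈ R` for
every `v ∈ ℕ^d`. -/
def MonotoneRel {d : ℕ} (R : NVec d → NVec d → Prop) : Prop :=
  ∀ x y, R x y → ∀ v : NVec d, R (x + v) (y + v)

/-- A relation `P ⊆ ℕ^d × ℕ^d` is periodic if it contains `(0,0)` and is closed
under componentwise addition. -/
def IsPeriodicRel {d : ℕ} (P : Set (NVec d × NVec d)) : Prop :=
  (0, 0) ∈ P ∧ ∀ p ∈ P, ∀ q ∈ P, (p.1 + q.1, p.2 + q.2) ∈ P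

/-- The transformer relation `P_c` of a configuration `c` with respect to the
reflexive transitive closure of `R`. -/
def transformer {d : ℕ} (R : NVec d → NVec d → Prop) (c : NVec d) :
    Set (NVec d × NVec d) :=
  {p | Relation.ReflTransGen R (c + p.1) (c + p.2)}

/-- `Q`: the set of configurations reachable along some run from `c+x` to `c+y`
with `(x,y) ∈ P`. -/
def QSet {d : ℕ} (R : NVec d → NVec d → Prop) (c : NVec d)
    (P : Set (NVec d × NVec d)) : Set (NVec d) :=
  {q | ∃ p ∈ P, Relation.ReflTransGen R (c + p.1) q ∧ Relation.ReflTransGen R q (c + p.2)}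

/-- `H`: the set of intraproductions, i.e. vectors `h` with `c + h ∈ Q`. -/
def HSet {d : ℕ} (R : NVec d → NVec d → Prop) (c : NVec d)
    (P : Set (NVec d × NVec d)) : Set (NVec d) :=
  {h | c + h ∈ QSet R c P}

/-- For a monotone relation `R`, a configuration `c` and a periodic
relation `P ⊆ P_c`, we have `Q + H ⊆ Q`. -/
theorem qSet_add_hSet_subset {d : ℕ} (R : NVec d → NVec d → Prop)
    (hR : MonotoneRel R) (c : NVec d) (P : Set (NVec d × NVec d))
    (hP : IsPeriodicRel P) (hPc : P ⊆ transformer R c) :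
    ∀ q ∈ QSet R c P, ∀ h ∈ HSet R c P, q + h ∈ QSet R c P := by
  have mono : ∀ {a b : NVec d}, Relation.ReflTransGen R a b → ∀ v : NVec d,
      Relation.ReflTransGen R (a + v) (b + v) := by
    intro a b hab v
    exact Relation.ReflTransGen.lift (fun x => x + v) (fun x y hxy => hR x y hxy v) _ _ hab
  rintro q ⟨p, hp, h1, h2⟩ h ⟨p', hp', h3, h4⟩
  refine ⟨(p.1 + p'.1, p.2 + p'.2), hP.2 p hp p' hp', ?_, ?_⟩
  · have e1 := mono h3 p.1
    have e2 := mono h1 h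
    rw [show c + p'.1 + p.1 = c + (p.1 + p'.1) by abel,
      show c + h + p.1 = c + p.1 + h by abel] at e1
    exact e1.trans e2
  · have e1 := mono h2 h
    have e2 := mono h4 p.2
    rw [show c + p'.2 + p.2 = c + (p.2 + p'.2) by abel,
      show c + h + p.2 = c + p.2 + h by abel] at e2
    exact e1.trans e2
end

section
/- Let R ⊆ ℕ^d × ℕ^d be a monotone relation with reflexive transitive closure →*, let c ∈ ℕ^d, let P be a periodic relation with P ⊆ P_c := {(x,y) : c+x →* c+y}, and define Q := {q ∈ ℕ^d : ∃(x,y) ∈ P, c+x →* q and q →* c+y} and H := {h ∈ ℕ^d : c+h ∈ Q}. Let i be a coordinate such that the set {q(i) : q ∈ Q} is finite. Then h(i) = 0 for every h ∈ H; in particular, x(i) = y(i) = 0 for every (x,y) ∈ P. -/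
theorem rtg_add_aux {d : ℕ} {R : NVec d → NVec d → Prop} (hR : MonotoneRel R)
    {x y : NVec d} (h : Relation.ReflTransGen R x y) (v : NVec d) :
    Relation.ReflTransGen R (x + v) (y + v) := by
  induction h with
  | refl => exact Relation.ReflTransGen.refl
  | tail _ h2 ih => exact ih.tail (hR _ _ h2 v)

theorem hset_add_aux {d : ℕ} {R : NVec d → NVec d → Prop} (hR : MonotoneRel R)
    {c : NVec d} {P : Set (NVec d × NVec d)} (hP : IsPeriodicRel P)
    {h k : NVec d} (hh : h ∈ HSet R c P) (hk : k ∈ HSet R c P) : h + k ∈ HSet R c P := by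
  obtain ⟨p, hp, h1, h2⟩ := hh
  obtain ⟨q, hq, k1, k2⟩ := hk
  refine ⟨_, hP.2 p hp q hq, ?_, ?_⟩
  · have a := rtg_add_aux hR h1 q.1
    have b := rtg_add_aux hR k1 h
    rw [add_right_comm c h, add_assoc c p.1] at a
    rw [add_assoc c k, add_comm k h] at b
    exact a.trans b
  · have a := rtg_add_aux hR h2 k
    have b := rtg_add_aux hR k2 p.2
    rw [add_right_comm c p.2, add_assoc c h] at a
    rw [add_assoc c q.2, add_comm q.2] at b
    exact a.trans b

/-- For a monotone relation `R`, a configuration `c` and a periodic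
relation `P ⊆ P_c`: if coordinate `i` is bounded on `Q` (the set `{q(i) : q ∈ Q}` is
finite), then every intraproduction `h ∈ H` has `h(i) = 0`; in particular
`x(i) = y(i) = 0` for every `(x,y) ∈ P`. -/
theorem bounded_coordinate_zero {d : ℕ} (R : NVec d → NVec d → Prop)
    (hR : MonotoneRel R) (c : NVec d) (P : Set (NVec d × NVec d))
    (hP : IsPeriodicRel P) (hPc : P ⊆ transformer R c)
    (i : Fin d) (hb : ((fun q : NVec d => q i) '' QSet R c P).Finite) :
    (∀ h ∈ HSet R c P, h i = 0) ∧ ∀ p ∈ P, p.1 i = 0 ∧ p.2 i = 0 := by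
  have key : ∀ h ∈ HSet R c P, h i = 0 := by
    intro h hh
    by_contra hne
    obtain ⟨B, hB⟩ := hb.bddAbove
    have hn : ∀ n : ℕ, (n + 1) • h ∈ HSet R c P := by
      intro n
      induction n with
      | zero => simpa using hh
      | succ n ih => rw [succ_nsmul]; exact hset_add_aux hR hP ih hh
    have h1 : (c + (B + 1) • h) i ≤ B := hB ⟨_, hn B, rfl⟩
    simp only [Pi.add_apply, Pi.smul_apply, smul_eq_mul] at h1
    have h2 : 1 ≤ h i := Nat.one_le_iff_ne_zero.mpr hne
    nlinarith
  refine ⟨key, fun p hp => ⟨key _ ⟨p, hp, .refl, hPc hp⟩, key _ ⟨p, hp, hPc hp, .refl⟩⟩⟩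
end
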